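/- Under the CFL-type condition Δt/h^α ≤ 1/(2 ε C_α (1 + 1/α − ζ(α−1))), the explicit Euler scheme for the natural condition satisfies the discrete maximum principle: if M ≥ 0 and 0 ≤ P^0_j ≤ M for all j ∈ ℤ (with P^0_j = 0 for |j| ≥ J), then for every n ≥ 0 and every j ∈ ℤ one has 0 ≤ P^n_j ≤ M. -/

import Mathlib

open scoped BigOperators

/-- The constant `C_α = α Γ((1+α)/2) / (2^{1-α} √π Γ(1-α/2))`. -/
noncomputable def Cconst (α : ℝ) : ℝ :=
  α * Real.Gamma ((1 + α) / 2) /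
    ((2 : ℝ) ^ (1 - α) * Real.sqrt Real.pi * Real.Gamma (1 - α / 2))

/-- The real value of the Riemann zeta function at a real argument. -/
noncomputable def zetaR (s : ℝ) : ℝ := (riemannZeta (s : ℂ)).re

/-- The double-primed sum `Σ''_{k=a, k≠0}^{b} g(k)`: the sum over integers `a ≤ k ≤ b`,
omitting `k = 0`, where the end terms `k = a` and `k = b` carry weight `1/2`. -/
noncomputable def dsum (a b : ℤ) (g : ℤ → ℝ) : ℝ :=
  ∑ k ∈ (Finset.Icc a b).erase 0, (if k = a ∨ k = b then (1 : ℝ) / 2 else 1) * g k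

/-!
Put `r = Δt ε C_α h^{-α}`. One step of the scheme replaces `Q_j` by
`(1 - r (S - 2 ζ(α-1))) Q_j + r (-ζ(α-1)) (Q_{j-1} + Q_{j+1}) + r Σ'' |k|^{-1-α} Q_{j+k}`,
where `S = Σ'' |k|^{-1-α}`. It fixes constants, so as soon as all these weights are nonnegative it
is monotone and maps every interval into itself. Nonnegativity of the weights needs
`ζ(α-1) ≤ 0` and `S ≤ 2 ζ(1+α) ≤ 2 (1 + 1/α)`.

Both bounds come from `ζ(s) ≤ s / (s - 1)` for real `s > 0`, `s ≠ 1`, which is read off the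
expansion `ζ(s) = s / (s - 1) - s ∑_{n ≥ 1} ∫_n^{n+1} (x - n) x^{-s-1} dx`; for `s < 0` the
functional equation reduces the sign of `ζ(s)` to that of a cosine.
-/

section Zeta

open Set Filter Topology

/-- The error in `(1 - s) (a + 1)^{-s} ≈ (a + 1)^{1-s} - a^{1-s}`, used to compare `ζ(s)` with
`s / (s - 1)`. It is kept in closed form, in which it is visibly entire in `s`. -/
noncomputable def zetaRemainder (a : ℝ) (s : ℂ) : ℂ :=
  ((a + 1 : ℝ) : ℂ) ^ (1 - s) - (a : ℂ) ^ (1 - s) - (1 - s) * ((a + 1 : ℝ) : ℂ) ^ (-s)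

section Remainder

variable {a : ℝ} (ha : 0 < a)
include ha

lemma differentiable_zetaRemainder : Differentiable ℂ (zetaRemainder a) := by
  have ha₀ : (a : ℂ) ≠ 0 := by exact_mod_cast ha.ne'
  have ha₁ : ((a + 1 : ℝ) : ℂ) ≠ 0 := by exact_mod_cast (by linarith : a + 1 ≠ 0)
  unfold zetaRemainder
  fun_prop (disch := first | exact .inl ha₀ | exact .inl ha₁)

lemma zetaRemainder_eq_integral (s : ℂ) :
    zetaRemainder a s = ∫ x in a..a + 1, s * (1 - s) * ((x - a) * (x : ℂ) ^ (-s - 1)) := by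
  have hslit : ∀ x ∈ uIcc a (a + 1), (x : ℂ) ∈ Complex.slitPlane := fun x hx ↦
    Complex.ofReal_mem_slitPlane.2 <|
      ha.trans_le (uIcc_of_le (by linarith : a ≤ a + 1) ▸ hx).1
  have hpow (c : ℂ) {x : ℝ} (hx : x ∈ uIcc a (a + 1)) :
      HasDerivAt (fun y : ℝ ↦ (y : ℂ) ^ c) (c * (x : ℂ) ^ (c - 1)) x :=
    (Complex.hasStrictDerivAt_cpow_const (hslit x hx)).hasDerivAt.comp_ofReal
  have hderiv : ∀ x ∈ uIcc a (a + 1),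
      HasDerivAt (fun y : ℝ ↦ (y : ℂ) ^ (1 - s) - (1 - s) * ((y - a) * (y : ℂ) ^ (-s)))
        (s * (1 - s) * ((x - a) * (x : ℂ) ^ (-s - 1))) x := by
    intro x hx
    have hlin : HasDerivAt (fun y : ℝ ↦ (y : ℂ) - a) 1 x :=
      Complex.ofRealCLM.hasDerivAt.sub_const _
    refine ((hpow (1 - s) hx).sub ((hlin.mul (hpow (-s) hx)).const_mul (1 - s))).congr_deriv ?_
    rw [show 1 - s - 1 = -s by ring]
    ring
  have hcont : ContinuousOn (fun x : ℝ ↦ s * (1 - s) * ((x - a) * (x : ℂ) ^ (-s - 1)))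
      (uIcc a (a + 1)) := fun x hx ↦
    (continuousAt_const.mul ((by fun_prop : ContinuousAt (fun x : ℝ ↦ (x : ℂ) - a) x).mul
      (hpow (-s - 1) hx).continuousAt)).continuousWithinAt
  rw [intervalIntegral.integral_eq_sub_of_hasDerivAt hderiv hcont.intervalIntegrable,
    zetaRemainder]
  push_cast
  ring

lemma norm_zetaRemainder_le {s : ℂ} (hs : -1 ≤ s.re) :
    ‖zetaRemainder a s‖ ≤ ‖s * (1 - s)‖ * a ^ (-s.re - 1) := by
  rw [zetaRemainder_eq_integral ha]
  suffices hbound : ∀ x ∈ uIoc a (a + 1), ‖s * (1 - s) * ((x - a) * (x : ℂ) ^ (-s - 1))‖ ≤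
      ‖s * (1 - s)‖ * a ^ (-s.re - 1) by
    simpa only [add_sub_cancel_left, abs_one, mul_one] using
      intervalIntegral.norm_integral_le_of_norm_le_const hbound
  intro x hx
  obtain ⟨hax, hxa⟩ : a < x ∧ x ≤ a + 1 := by rwa [uIoc_of_le (by linarith)] at hx
  have hlin : ‖(x : ℂ) - a‖ ≤ 1 := by
    rw [← Complex.ofReal_sub, Complex.norm_of_nonneg (by linarith)]
    linarith
  have hpow : ‖(x : ℂ) ^ (-s - 1)‖ ≤ a ^ (-s.re - 1) := by
    rw [Complex.norm_cpow_eq_rpow_re_of_pos (ha.trans hax)]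
    exact Real.rpow_le_rpow_of_nonpos ha hax.le (by simp; linarith)
  rw [norm_mul, norm_mul ((x : ℂ) - a)]
  gcongr
  exact (mul_le_of_le_one_left (norm_nonneg _) hlin).trans hpow

lemma one_sub_mul_zetaRemainder_re_nonneg {s : ℝ} (hs : 0 ≤ s) :
    0 ≤ (1 - s) * (zetaRemainder a s).re := by
  have hint : zetaRemainder a s =
      ((∫ x in a..a + 1, s * (1 - s) * ((x - a) * x ^ (-s - 1)) : ℝ) : ℂ) := by
    rw [zetaRemainder_eq_integral ha, ← intervalIntegral.integral_ofReal]
    refine intervalIntegral.integral_congr fun x hx ↦ ?_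
    have hx₀ : 0 ≤ x := ha.le.trans (uIcc_of_le (by linarith : a ≤ a + 1) ▸ hx).1
    simp [Complex.ofReal_cpow hx₀]
  rw [hint, Complex.ofReal_re, ← intervalIntegral.integral_const_mul]
  refine intervalIntegral.integral_nonneg (by linarith) fun x hx ↦ ?_
  have hxa : 0 ≤ x - a := sub_nonneg.2 hx.1
  have hx₀ : 0 < x := ha.trans_le hx.1
  calc 0 ≤ s * (1 - s) ^ 2 * ((x - a) * x ^ (-s - 1)) := by positivity
    _ = (1 - s) * (s * (1 - s) * ((x - a) * x ^ (-s - 1))) := by ring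

end Remainder

lemma summable_nat_add_one_rpow {p : ℝ} (hp : p < -1) : Summable fun n : ℕ ↦ ((n : ℝ) + 1) ^ p := by
  simpa using (summable_nat_add_iff 1).2 (Real.summable_nat_rpow.2 hp)

lemma summable_zetaRemainder {s : ℂ} (hs : 0 < s.re) :
    Summable fun n : ℕ ↦ zetaRemainder (n + 1) s :=
  .of_norm_bounded ((summable_nat_add_one_rpow (by linarith)).mul_left ‖s * (1 - s)‖) fun _ ↦
    norm_zetaRemainder_le (by positivity) (by linarith)

lemma differentiableOn_tsum_zetaRemainder :
    DifferentiableOn ℂ (fun s ↦ ∑' n : ℕ, zetaRemainder (n + 1) s) {s | 0 < s.re} := by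
  intro s₀ (hs₀ : 0 < s₀.re)
  obtain ⟨σ, hσ, hσs₀⟩ := exists_between hs₀
  let U : Set ℂ := {s | σ < s.re} ∩ {s | ‖s * (1 - s)‖ < ‖s₀ * (1 - s₀)‖ + 1}
  have hU : IsOpen U :=
    (isOpen_lt continuous_const Complex.continuous_re).inter (isOpen_lt (by fun_prop) (by fun_prop))
  have hs₀U : s₀ ∈ U := ⟨hσs₀, lt_add_one ‖s₀ * (1 - s₀)‖⟩
  have hbound : ∀ (n : ℕ), ∀ s ∈ U, ‖zetaRemainder (n + 1) s‖ ≤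
      (‖s₀ * (1 - s₀)‖ + 1) * ((n : ℝ) + 1) ^ (-σ - 1) := by
    rintro n s ⟨hσs : σ < s.re, hs : ‖s * (1 - s)‖ < _⟩
    refine (norm_zetaRemainder_le (by positivity) (by linarith)).trans ?_
    gcongr
    simp
  have hdiff := Complex.differentiableOn_tsum_of_summable_norm
    ((summable_nat_add_one_rpow (by linarith : -σ - 1 < -1)).mul_left _)
    (fun n ↦ (differentiable_zetaRemainder n.cast_add_one_pos).differentiableOn) hU hbound
  exact (hdiff.differentiableAt (hU.mem_nhds hs₀U)).differentiableWithinAt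

lemma sum_zetaRemainder (s : ℂ) (N : ℕ) :
    ∑ n ∈ Finset.range N, zetaRemainder (n + 1) s =
      ((N + 1 : ℝ) : ℂ) ^ (1 - s) + (s - 1) * ∑ n ∈ Finset.range (N + 1), 1 / ((n : ℂ) + 1) ^ s
        - s := by
  induction N with
  | zero => simp
  | succ N ih =>
    rw [Finset.sum_range_succ, ih, Finset.sum_range_succ _ (N + 1), zetaRemainder, Complex.cpow_neg]
    push_cast
    ring

lemma tsum_zetaRemainder_of_one_lt_re {s : ℂ} (hs : 1 < s.re) :
    ∑' n : ℕ, zetaRemainder (n + 1) s = (s - 1) * riemannZeta s - s := by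
  have hpow : Tendsto (fun N : ℕ ↦ ((N + 1 : ℝ) : ℂ) ^ (1 - s)) atTop (𝓝 0) := by
    rw [tendsto_zero_iff_norm_tendsto_zero]
    have hre := (tendsto_rpow_neg_atTop (sub_pos.2 hs)).comp
      (tendsto_atTop_add_const_right _ (1 : ℝ) tendsto_natCast_atTop_atTop)
    refine hre.congr fun N ↦ ?_
    rw [Complex.norm_cpow_eq_rpow_re_of_pos N.cast_add_one_pos]
    simp
  have hzeta : Tendsto (fun N ↦ ∑ n ∈ Finset.range (N + 1), 1 / ((n : ℂ) + 1) ^ s) atTop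
      (𝓝 (riemannZeta s)) := by
    have hsum : Summable fun n : ℕ ↦ 1 / ((n : ℂ) + 1) ^ s := by
      simpa using (summable_nat_add_iff 1).2 (Complex.summable_one_div_nat_cpow.2 hs)
    rw [zeta_eq_tsum_one_div_nat_add_one_cpow hs]
    exact (tendsto_add_atTop_iff_nat 1).2 hsum.tendsto_sum_tsum_nat
  refine ((summable_zetaRemainder (by linarith)).hasSum_iff_tendsto_nat.2 ?_).tsum_eq
  simpa only [sum_zetaRemainder, zero_add] using (hpow.add (hzeta.const_mul (s - 1))).sub_const s

lemma riemannZeta₁_eq_sub_one_mul {s : ℂ} (hs : s ≠ 1) :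
    riemannZeta₁ s = (s - 1) * riemannZeta s := by
  rw [riemannZeta_eq_inv_sub_mul hs, mul_inv_cancel_left₀ (sub_ne_zero.2 hs)]

lemma hasSum_zetaRemainder {s : ℂ} (hs : 0 < s.re) (hs₁ : s ≠ 1) :
    HasSum (fun n : ℕ ↦ zetaRemainder (n + 1) s) ((s - 1) * riemannZeta s - s) := by
  have hopen : IsOpen {z : ℂ | 0 < z.re} := isOpen_lt continuous_const Complex.continuous_re
  have hentire : Differentiable ℂ fun z ↦ riemannZeta₁ z - z :=
    differentiable_riemannZeta₁.sub differentiable_id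
  have heq : EqOn (fun z ↦ ∑' n : ℕ, zetaRemainder (n + 1) z) (fun z ↦ riemannZeta₁ z - z)
      {z | 0 < z.re} := by
    refine (differentiableOn_tsum_zetaRemainder.analyticOnNhd
      hopen).eqOn_of_preconnected_of_eventuallyEq (hentire.differentiableOn.analyticOnNhd hopen)
      (convex_halfSpace_re_gt 0).isPreconnected (by simp : (2 : ℂ) ∈ {z : ℂ | 0 < z.re}) ?_
    filter_upwards [(isOpen_lt continuous_const Complex.continuous_re).mem_nhds
      (by simp : (1 : ℝ) < (2 : ℂ).re)] with z (hz : 1 < z.re)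
    rw [tsum_zetaRemainder_of_one_lt_re hz,
      riemannZeta₁_eq_sub_one_mul (by rintro rfl; simp at hz)]
  rw [← riemannZeta₁_eq_sub_one_mul hs₁]
  exact (summable_zetaRemainder hs).hasSum_iff.2 (heq hs)

lemma zetaR_le_div_sub_one {s : ℝ} (hs : 0 < s) (hs₁ : s ≠ 1) : zetaR s ≤ s / (s - 1) := by
  have hsum := Complex.hasSum_re (hasSum_zetaRemainder (s := s) hs (by exact_mod_cast hs₁))
  have hnonneg : 0 ≤ (1 - s) * ((s - 1) * zetaR s - s) := by
    refine ((hsum.mul_left (1 - s)).nonneg fun n ↦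
      one_sub_mul_zetaRemainder_re_nonneg n.cast_add_one_pos hs.le).trans_eq ?_
    simp [zetaR]
  have hsq : 0 < (s - 1) ^ 2 := by have := sub_ne_zero.2 hs₁; positivity
  calc zetaR s ≤ s * (s - 1) / (s - 1) ^ 2 := by rw [le_div_iff₀ hsq]; linarith
    _ = s / (s - 1) := by have := sub_ne_zero.2 hs₁; field_simp

lemma zetaR_one_sub {s : ℝ} (hs : ∀ n : ℕ, s ≠ -n) (hs₁ : s ≠ 1) :
    zetaR (1 - s) =
      2 * (2 * Real.pi) ^ (-s) * Real.Gamma s * Real.cos (Real.pi * s / 2) * zetaR s := by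
  have hcoeff : 2 * (2 * (Real.pi : ℂ)) ^ (-(s : ℂ)) * Complex.Gamma s *
      Complex.cos (Real.pi * s / 2) =
      ((2 * (2 * Real.pi) ^ (-s) * Real.Gamma s * Real.cos (Real.pi * s / 2) : ℝ) : ℂ) := by
    push_cast [Complex.Gamma_ofReal, Complex.ofReal_cpow (by positivity : 0 ≤ 2 * Real.pi)]
    rfl
  rw [zetaR, zetaR, Complex.ofReal_sub, Complex.ofReal_one,
    riemannZeta_one_sub (fun n ↦ by exact_mod_cast hs n) (by exact_mod_cast hs₁), hcoeff,
    Complex.re_ofReal_mul]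

lemma zetaR_lt_zero {s : ℝ} (hs : -2 < s) (hs₁ : s < 1) : zetaR s < 0 := by
  rcases lt_trichotomy s 0 with hneg | rfl | hpos
  · have hzeta : 0 < zetaR (1 - s) := riemannZeta_re_pos_of_one_lt (by linarith)
    have hcos : Real.cos (Real.pi * (1 - s) / 2) < 0 :=
      Real.cos_neg_of_pi_div_two_lt_of_lt (by nlinarith [Real.pi_pos]) (by nlinarith [Real.pi_pos])
    have hcoeff : 0 < 2 * (2 * Real.pi) ^ (-(1 - s)) * Real.Gamma (1 - s) :=
      mul_pos (by positivity) (Real.Gamma_pos_of_pos (by linarith))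
    have hpole (n : ℕ) : 1 - s ≠ -n := by have := n.cast_nonneg (α := ℝ); linarith
    rw [← sub_sub_cancel 1 s, zetaR_one_sub hpole (by linarith)]
    exact mul_neg_of_neg_of_pos (mul_neg_of_pos_of_neg hcoeff hcos) hzeta
  · norm_num [zetaR, riemannZeta_zero]
  · exact (zetaR_le_div_sub_one hpos hs₁.ne).trans_lt (div_neg_of_pos_of_neg hpos (by linarith))

lemma tsum_int_abs_rpow_neg {s : ℝ} (hs : 1 < s) :
    ∑' k : ℤ, |(k : ℝ)| ^ (-s) = 2 * zetaR s := by
  have hzeta : zetaR s = ∑' n : ℕ, ((n + 1 : ℕ) : ℝ) ^ (-s) := by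
    have hcast : riemannZeta s = ((∑' n : ℕ, ((n + 1 : ℕ) : ℝ) ^ (-s) : ℝ) : ℂ) := by
      rw [zeta_eq_tsum_one_div_nat_add_one_cpow (by simpa using hs), Complex.ofReal_tsum]
      refine tsum_congr fun n ↦ ?_
      rw [Complex.ofReal_cpow (by positivity)]
      push_cast
      rw [Complex.cpow_neg, one_div]
    rw [zetaR, hcast, Complex.ofReal_re]
  rw [tsum_int_eq_zero_add_two_mul_tsum_pnat (fun k ↦ by simp) (Real.summable_abs_int_rpow hs),
    hzeta, ← tsum_pnat_eq_tsum_succ (f := fun n : ℕ ↦ (n : ℝ) ^ (-s))]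
  simp [Real.zero_rpow (by linarith : -s ≠ 0)]

end Zeta

section DSum

variable {a b : ℤ} {f g : ℤ → ℝ}

lemma dsum_mono (hfg : ∀ k, f k ≤ g k) : dsum a b f ≤ dsum a b g := by
  unfold dsum
  gcongr with k
  exact hfg k

lemma dsum_sub : dsum a b (fun k ↦ f k - g k) = dsum a b f - dsum a b g := by
  simp only [dsum, mul_sub, Finset.sum_sub_distrib]

lemma mul_dsum (c : ℝ) : c * dsum a b f = dsum a b fun k ↦ c * f k := by
  simp only [dsum, Finset.mul_sum, mul_left_comm c]

lemma dsum_le_tsum (hf : Summable f) (hf₀ : ∀ k, 0 ≤ f k) : dsum a b f ≤ ∑' k, f k := by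
  refine (Finset.sum_le_sum fun k _ ↦ ?_).trans (hf.sum_le_tsum ((Finset.Icc a b).erase 0)
    fun k _ ↦ hf₀ k)
  refine mul_le_of_le_one_left (hf₀ k) ?_
  split_ifs <;> norm_num

end DSum

lemma dsum_abs_rpow_le {α : ℝ} (hα : 0 < α) (a b : ℤ) :
    dsum a b (fun k ↦ |(k : ℝ)| ^ (-(1 + α))) ≤ 2 * (1 + 1 / α) :=
  calc dsum a b (fun k ↦ |(k : ℝ)| ^ (-(1 + α)))
      ≤ ∑' k : ℤ, |(k : ℝ)| ^ (-(1 + α)) :=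
        dsum_le_tsum (Real.summable_abs_int_rpow (by linarith)) fun k ↦ by positivity
    _ = 2 * zetaR (1 + α) := tsum_int_abs_rpow_neg (by linarith)
    _ ≤ 2 * ((1 + α) / (1 + α - 1)) := by
        gcongr
        exact zetaR_le_div_sub_one (by linarith) (by linarith)
    _ = 2 * (1 + 1 / α) := by rw [add_sub_cancel_left]; field_simp; ring

lemma Cconst_pos {α : ℝ} (hα : 0 < α) (hα2 : α < 2) : 0 < Cconst α := by
  have hden : 0 < Real.Gamma (1 - α / 2) := Real.Gamma_pos_of_pos (by linarith)
  unfold Cconst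
  positivity

/-- The value at `j` of one explicit Euler step applied to `Q`, with the sum running over
`a ≤ k ≤ b`. The mesh parameters enter only through the ratio `r = Δt ε C_α h^{-α}`. -/
noncomputable def eulerStep (α r : ℝ) (a b : ℤ) (Q : ℤ → ℝ) (j : ℤ) : ℝ :=
  Q j - r * zetaR (α - 1) * (Q (j - 1) - 2 * Q j + Q (j + 1)) +
    r * dsum a b fun k ↦ |(k : ℝ)| ^ (-(1 + α)) * (Q (j + k) - Q j)

section EulerStep

variable {α r : ℝ} {a b : ℤ}

lemma eulerStep_const (α r : ℝ) (a b : ℤ) (M : ℝ) (j : ℤ) :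
    eulerStep α r a b (fun _ ↦ M) j = M := by
  simp only [eulerStep, dsum, sub_self, mul_zero, Finset.sum_const_zero]
  ring

lemma eulerStep_eq_weighted_sum (α r : ℝ) (a b : ℤ) (Q : ℤ → ℝ) (j : ℤ) :
    eulerStep α r a b Q j =
      (1 - r * (dsum a b (fun k ↦ |(k : ℝ)| ^ (-(1 + α))) - 2 * zetaR (α - 1))) * Q j +
        r * -zetaR (α - 1) * (Q (j - 1) + Q (j + 1)) +
        r * dsum a b fun k ↦ |(k : ℝ)| ^ (-(1 + α)) * Q (j + k) := by
  have hdsum : dsum a b (fun k ↦ |(k : ℝ)| ^ (-(1 + α)) * (Q (j + k) - Q j)) =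
      dsum a b (fun k ↦ |(k : ℝ)| ^ (-(1 + α)) * Q (j + k)) -
        Q j * dsum a b fun k ↦ |(k : ℝ)| ^ (-(1 + α)) := by
    rw [mul_dsum, ← dsum_sub]
    simp only [mul_sub, mul_comm (Q j)]
  rw [eulerStep, hdsum]
  ring

lemma monotone_eulerStep (hα : 0 < α) (hα2 : α < 2) (hr : 0 ≤ r)
    (hCFL : r * (2 * (1 + 1 / α - zetaR (α - 1))) ≤ 1) : Monotone (eulerStep α r a b) := by
  intro Q R hQR j
  have hzeta : 0 ≤ -zetaR (α - 1) := neg_nonneg.2 (zetaR_lt_zero (by linarith) (by linarith)).le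
  have hdiag : 0 ≤ 1 - r * (dsum a b (fun k ↦ |(k : ℝ)| ^ (-(1 + α))) - 2 * zetaR (α - 1)) := by
    have := mul_le_mul_of_nonneg_left (dsum_abs_rpow_le hα a b) hr
    linarith
  have hdsum : dsum a b (fun k ↦ |(k : ℝ)| ^ (-(1 + α)) * Q (j + k)) ≤
      dsum a b fun k ↦ |(k : ℝ)| ^ (-(1 + α)) * R (j + k) :=
    dsum_mono fun k ↦ by gcongr; exact hQR _
  simp only [eulerStep_eq_weighted_sum]
  gcongr <;> apply hQR

lemma eulerStep_mem_Icc (hα : 0 < α) (hα2 : α < 2) (hr : 0 ≤ r)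
    (hCFL : r * (2 * (1 + 1 / α - zetaR (α - 1))) ≤ 1) {Q : ℤ → ℝ} {m M : ℝ}
    (hQ : ∀ j, Q j ∈ Set.Icc m M) (j : ℤ) : eulerStep α r a b Q j ∈ Set.Icc m M :=
  ⟨(eulerStep_const α r a b m j).symm.trans_le
      (monotone_eulerStep hα hα2 hr hCFL (fun i ↦ (hQ i).1) j),
    (monotone_eulerStep hα hα2 hr hCFL (fun i ↦ (hQ i).2) j).trans_eq (eulerStep_const α r a b M j)⟩

end EulerStep

lemma mul_dsum_div_abs_mul_rpow {h : ℝ} (hh : 0 < h) (α : ℝ) (a b : ℤ) (g : ℤ → ℝ) :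
    h * dsum a b (fun k ↦ g k / |(k : ℝ) * h| ^ (1 + α)) =
      h ^ (-α) * dsum a b fun k ↦ |(k : ℝ)| ^ (-(1 + α)) * g k := by
  rw [mul_dsum, mul_dsum]
  congr 1 with k
  rw [abs_mul, abs_of_pos hh, Real.mul_rpow (abs_nonneg _) hh.le, Real.rpow_neg (abs_nonneg _),
    Real.rpow_neg hh.le, Real.rpow_add hh, Real.rpow_one]
  field_simp

lemma eulerStep_meshRatio {h : ℝ} (hh : 0 < h) (α ε Δt : ℝ) (a b : ℤ) (Q : ℤ → ℝ) (j : ℤ) :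
    eulerStep α (Δt * ε * Cconst α * h ^ (-α)) a b Q j =
      Q j - Δt * ε * Cconst α * zetaR (α - 1) * h ^ (-α) * (Q (j - 1) - 2 * Q j + Q (j + 1)) +
        Δt * ε * Cconst α * h *
          dsum a b fun k ↦ (Q (j + k) - Q j) / |(k : ℝ) * h| ^ (1 + α) := by
  have hdsum := mul_dsum_div_abs_mul_rpow hh α a b fun k ↦ Q (j + k) - Q j
  rw [eulerStep, mul_assoc (_ * Cconst α) h, hdsum]
  ring

lemma meshRatio_mul_le_one {α ε h Δt : ℝ} (hα : 0 < α) (hα2 : α < 2) (hε : 0 < ε) (hh : 0 ≤ h)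
    (hCFL : Δt / h ^ α ≤ 1 / (2 * ε * Cconst α * (1 + 1 / α - zetaR (α - 1)))) :
    Δt * ε * Cconst α * h ^ (-α) * (2 * (1 + 1 / α - zetaR (α - 1))) ≤ 1 := by
  have hC : 0 < Cconst α := Cconst_pos hα hα2
  have hD : 0 < 1 + 1 / α - zetaR (α - 1) := by
    have := zetaR_lt_zero (s := α - 1) (by linarith) (by linarith)
    have : 0 < 1 / α := by positivity
    linarith
  rw [le_div_iff₀ (by positivity), div_eq_mul_inv, ← Real.rpow_neg hh] at hCFL
  linarith

/-- Discrete maximum principle for the explicit Euler scheme with the natural condition. -/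
theorem stmt_1 (α ε h Δt M : ℝ) (J : ℤ)
    (hα : 0 < α) (hα2 : α < 2) (hε : 0 < ε) (hJ : 1 ≤ J)
    (hh : 0 < h) (hΔt : 0 < Δt)
    (P : ℕ → ℤ → ℝ)
    (hbc : ∀ n : ℕ, ∀ j : ℤ, J ≤ |j| → P n j = 0)
    (hscheme : ∀ n : ℕ, ∀ j : ℤ, |j| < J →
      P (n + 1) j =
        P n j
          - Δt * ε * Cconst α * zetaR (α - 1) * h ^ (-α) *
              (P n (j - 1) - 2 * P n j + P n (j + 1))
          + Δt * ε * Cconst α * h *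
              dsum (-J - j) (J - j)
                (fun k => (P n (j + k) - P n j) / |(k : ℝ) * h| ^ (1 + α)))
    (hCFL : Δt / h ^ α ≤ 1 / (2 * ε * Cconst α * (1 + 1 / α - zetaR (α - 1))))
    (hM : 0 ≤ M)
    (hinit : ∀ j : ℤ, 0 ≤ P 0 j ∧ P 0 j ≤ M) :
    ∀ n : ℕ, ∀ j : ℤ, 0 ≤ P n j ∧ P n j ≤ M := by
  have hr : 0 ≤ Δt * ε * Cconst α * h ^ (-α) := by
    have := Cconst_pos hα hα2
    positivity
  have hratio := meshRatio_mul_le_one hα hα2 hε hh.le hCFL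
  intro n
  induction n with
  | zero => exact hinit
  | succ n ih =>
    intro j
    rcases lt_or_ge |j| J with hj | hj
    · rw [hscheme n j hj, ← eulerStep_meshRatio hh]
      exact eulerStep_mem_Icc hα hα2 hr hratio ih j
    · rw [hbc (n + 1) j hj]
      exact ⟨le_rfl, hM⟩
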